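/- arXiv:2411.12691 — 4 statements merged into one kernel-verified Lean document; each statement's English description precedes it below -/
import Mathlib

section
/- Let S be a commutative ring with an ℕ-grading S = ⊕_{d≥0} S_d, let G be a finite group acting on S by graded ring automorphisms, and let 𝔭 ⊆ S be a prime ideal such that every G-invariant homogeneous element of positive degree belongs to 𝔭. Then every homogeneous element of positive degree belongs to 𝔭. -/
/-!
For `x` homogeneous of degree `d > 0`, the polynomial `F = ∏ σ : G, (X - C (σ • x))`
(`MulSemiringAction.charpoly G x`) is monic with root `x`. Its coefficient in degree `k < |G|` is
`G`-invariant and, up to sign, the elementary symmetric function of degree `|G| - k` in the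
conjugates `σ • x`, hence homogeneous of degree `(|G| - k) * d > 0`. So all non-leading
coefficients lie in `𝔭`, and `F(x) = 0` gives `x ^ |G| ∈ 𝔭`, whence `x ∈ 𝔭`.
-/

/-- If every `G`-invariant homogeneous element of positive degree of a graded commutative ring
`S` lies in a prime ideal `𝔭`, then every homogeneous element of positive degree lies in `𝔭`. -/
theorem homogeneous_mem_prime_of_invariant_mem
    (S : Type*) [CommRing S] (𝒜 : ℕ → AddSubgroup S) [GradedRing 𝒜]
    (G : Type*) [Group G] [Finite G] [MulSemiringAction G S]
    (hgraded : ∀ (σ : G) (d : ℕ) (x : S), x ∈ 𝒜 d → σ • x ∈ 𝒜 d)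
    (𝔭 : Ideal S) [𝔭.IsPrime]
    (hinv : ∀ (x : S) (d : ℕ), 0 < d → x ∈ 𝒜 d → (∀ σ : G, σ • x = x) → x ∈ 𝔭) :
    ∀ (x : S) (d : ℕ), 0 < d → x ∈ 𝒜 d → x ∈ 𝔭 := by
  intro x d hd hx
  have := Fintype.ofFinite G
  have : Nontrivial S := ⟨⟨0, 1, fun h =>
    (Ideal.ne_top_iff_one 𝔭).1 (Ideal.IsPrime.ne_top inferInstance) (h ▸ 𝔭.zero_mem)⟩⟩
  have hdeg : (MulSemiringAction.charpoly G x).natDegree = Fintype.card G := by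
    rw [MulSemiringAction.charpoly_eq, Polynomial.natDegree_prod_of_monic _ _
      fun σ _ => Polynomial.monic_X_sub_C _]
    simp
  have hweak : (MulSemiringAction.charpoly G x).IsWeaklyEisensteinAt 𝔭 := by
    refine ⟨fun {k} hk => ?_⟩
    rw [hdeg] at hk
    refine hinv _ ((Fintype.card G - k) * d) (Nat.mul_pos (by omega) hd) ?_
      (MulSemiringAction.smul_coeff_charpoly x k)
    simp only [MulSemiringAction.charpoly_eq, sub_eq_add_neg, ← Polynomial.C_neg]
    rw [Finset.prod_X_add_C_coeff _ _ (by simpa using hk.le)]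
    refine sum_mem fun t ht => ?_
    have hprod := SetLike.prod_mem_graded 𝒜 (fun _ : G => d) (fun σ => -(σ • x)) (F := t)
      fun σ _ => neg_mem (hgraded σ d x hx)
    rwa [Finset.sum_const, (Finset.mem_powersetCard.1 ht).2, Finset.card_univ,
      smul_eq_mul] at hprod
  exact Ideal.IsPrime.mem_of_pow_mem inferInstance _
    (hweak.pow_natDegree_le_of_root_of_monic_mem (MulSemiringAction.eval_charpoly G x)
      (MulSemiringAction.monic_charpoly G x) _ le_rfl)
end

section
/- Let S be a commutative ring with an ℕ-grading S = ⊕_{d≥0} S_d, let G be a finite group of order n acting on S by graded ring automorphisms, and let f ∈ S be a homogeneous element of positive degree. Then f^n lies in the ideal of S generated by the G-invariant homogeneous elements of positive degree. -/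
/-!
The element `f` is a root of the monic polynomial `F = ∏ σ : G, (X - C (σ • f))` of degree
`n = |G|`. Its coefficients are `G`-invariant because `G` permutes the factors, and the
coefficient of `X ^ k` is homogeneous of degree `d * (n - k)`
(`coeff_prod_X_sub_C_mem_graded`), which is positive for `k < n`. Hence
`f ^ n = -∑ k < n, F.coeff k * f ^ k` lies in the ideal generated by the non-leading
coefficients of `F`.
-/

open Polynomial in
/-- A product of factors `X - a i` with every `a i` homogeneous of degree `d` is homogeneous when
`X` is given degree `d`. -/
theorem coeff_prod_X_sub_C_mem_graded {S : Type*} [CommRing S] (𝒜 : ℕ → AddSubgroup S)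
    [GradedRing 𝒜] {ι : Type*} (a : ι → S) (d : ℕ) (s : Finset ι) (ha : ∀ i ∈ s, a i ∈ 𝒜 d) :
    ∀ k m : ℕ, k + m = s.card → (∏ i ∈ s, (X - C (a i))).coeff k ∈ 𝒜 (d * m) := by
  classical
  induction s using Finset.induction_on with
  | empty =>
    intro k m h
    obtain ⟨rfl, rfl⟩ : k = 0 ∧ m = 0 := by simpa using h
    simpa using SetLike.GradedOne.one_mem (A := 𝒜)
  | insert j s hj ih =>
    have ih := ih fun i hi => ha i (Finset.mem_insert_of_mem hi)
    have haj := ha j (Finset.mem_insert_self j s)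
    intro k m h
    rw [Finset.card_insert_of_notMem hj] at h
    rw [Finset.prod_insert hj, sub_mul, coeff_sub, coeff_C_mul]
    refine sub_mem ?_ ?_
    · cases k with
      | zero => simp
      | succ k => rw [coeff_X_mul]; exact ih k m (by omega)
    · cases m with
      | zero =>
        -- Here `k = s.card + 1` exceeds the degree of the remaining product.
        rw [coeff_eq_zero_of_natDegree_lt, mul_zero (a j)]
        · exact zero_mem _
        · have h1 : (∏ i ∈ s, (X - C (a i))).natDegree ≤ s.card * 1 :=
            (natDegree_prod_le _ _).trans
              (Finset.sum_le_card_nsmul _ _ _ fun i _ => natDegree_X_sub_C_le _)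
          omega
      | succ m =>
        rw [mul_add_one, add_comm]
        exact SetLike.GradedMul.mul_mem haj (ih k m (by omega))

/-- If `G` is a finite group of order `n` acting on a graded commutative ring `S` by graded
ring automorphisms and `f` is homogeneous of positive degree, then `f ^ n` lies in the ideal
generated by the `G`-invariant homogeneous elements of positive degree. -/
theorem pow_card_mem_span_invariants
    (S : Type*) [CommRing S] (𝒜 : ℕ → AddSubgroup S) [GradedRing 𝒜]
    (G : Type*) [Group G] [Fintype G] [MulSemiringAction G S]
    (hgraded : ∀ (σ : G) (d : ℕ) (x : S), x ∈ 𝒜 d → σ • x ∈ 𝒜 d)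
    (f : S) (d : ℕ) (hd : 0 < d) (hf : f ∈ 𝒜 d) :
    f ^ (Fintype.card G) ∈
      Ideal.span {x : S | (∃ e : ℕ, 0 < e ∧ x ∈ 𝒜 e) ∧ ∀ σ : G, σ • x = x} := by
  rcases subsingleton_or_nontrivial S with _ | _
  · rw [Subsingleton.elim (f ^ Fintype.card G) 0]
    exact zero_mem _
  have hmonic := MulSemiringAction.monic_charpoly G f
  have hdeg : (MulSemiringAction.charpoly G f).natDegree = Fintype.card G := by
    rw [MulSemiringAction.charpoly_eq, Polynomial.natDegree_prod_of_monic _ _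
      fun σ _ => Polynomial.monic_X_sub_C _]
    simp
  have heval := MulSemiringAction.eval_charpoly G f
  rw [Polynomial.eval_eq_sum_range, Finset.sum_range_succ, hmonic.coeff_natDegree, one_mul,
    hdeg] at heval
  rw [eq_neg_of_add_eq_zero_right heval]
  refine neg_mem (sum_mem fun k hk => Ideal.mul_mem_right _ _ (Ideal.subset_span ⟨?_, ?_⟩))
  · have hk := Finset.mem_range.mp hk
    refine ⟨d * (Fintype.card G - k), Nat.mul_pos hd (Nat.sub_pos_of_lt hk), ?_⟩
    rw [MulSemiringAction.charpoly_eq]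
    exact coeff_prod_X_sub_C_mem_graded 𝒜 _ d _ (fun σ _ => hgraded σ d f hf) _ _
      (by rw [Finset.card_univ]; omega)
  · exact fun σ => MulSemiringAction.smul_coeff_charpoly f k σ
end

section
/- Let S be a commutative ring with an ℕ-grading S = ⊕_{d≥0} S_d and let G be a finite group acting on S by graded ring automorphisms. Then the basic open subsets D₊(f) of the projective spectrum Proj S, where f ranges over the G-invariant homogeneous elements of S of positive degree, cover Proj S; equivalently, for every homogeneous prime ideal 𝔭 of S that does not contain the irrelevant ideal S₊ = ⊕_{d>0} S_d, there exists a G-invariant homogeneous element f of positive degree with f ∉ 𝔭. -/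
/-!
Let `𝔭` be a relevant homogeneous prime and pick a homogeneous `x ∉ 𝔭` of degree `d > 0`.
The norm `∏ σ, σ • x` may well lie in `𝔭`, so all elementary symmetric functions of the orbit
are used instead: the non-leading coefficients of `∏ σ, (X - σ • x)` are invariant and
homogeneous of positive degree (`coeff_prod_X_sub_C_mem`). If all of them were in `𝔭`, then
evaluating this monic polynomial at its root `x` would give `x ^ |G| ∈ 𝔭`, hence `x ∈ 𝔭`.
-/

open Polynomial in
/-- If all `a i` are homogeneous of degree `d`, the coefficient of `X ^ k` in `∏ (X - a i)` is
homogeneous of degree `j * d`, where `j` is the codegree of `X ^ k`. -/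
lemma coeff_prod_X_sub_C_mem {S ι : Type*} [CommRing S] (𝒜 : ℕ → Submodule ℤ S)
    [GradedAlgebra 𝒜] (d : ℕ) (a : ι → S) (ha : ∀ i, a i ∈ 𝒜 d) (s : Finset ι) :
    ∀ j k : ℕ, j + k = s.card → (∏ i ∈ s, (X - C (a i))).coeff k ∈ 𝒜 (j * d) := by
  classical
  induction s using Finset.induction_on with
  | empty =>
    intro j k h
    obtain ⟨rfl, rfl⟩ : j = 0 ∧ k = 0 := by simpa using h
    simpa using SetLike.GradedOne.one_mem (A := 𝒜)
  | insert i s hi ih =>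
    intro j k h
    rw [Finset.card_insert_of_notMem hi] at h
    rw [Finset.prod_insert hi, sub_mul, coeff_sub, coeff_C_mul]
    refine sub_mem ?_ ?_
    · cases k with
      | zero => simp
      | succ k =>
        rw [coeff_X_mul]
        exact ih j k (by omega)
    · cases j with
      | zero =>
        -- here `k` exceeds the degree of the remaining product
        nontriviality S
        rw [coeff_eq_zero_of_natDegree_lt, mul_zero]
        · exact zero_mem _
        · rw [natDegree_finsetProd_X_sub_C_eq_card]
          omega
      | succ j =>
        rw [Nat.succ_mul, add_comm]
        exact SetLike.GradedMul.mul_mem (ha i) (ih j k (by omega))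

/-- A relevant homogeneous prime misses some invariant homogeneous element of positive degree. -/
lemma exists_invariant_notMem
    {S : Type*} [CommRing S] (𝒜 : ℕ → Submodule ℤ S) [GradedAlgebra 𝒜]
    (G : Type*) [Group G] [Finite G] [MulSemiringAction G S]
    (hgraded : ∀ (σ : G) (d : ℕ) (x : S), x ∈ 𝒜 d → σ • x ∈ 𝒜 d)
    (𝔭 : ProjectiveSpectrum 𝒜) :
    ∃ f : S, (∃ d : ℕ, 0 < d ∧ f ∈ 𝒜 d) ∧ (∀ σ : G, σ • f = f) ∧
      f ∉ 𝔭.asHomogeneousIdeal := by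
  have := Fintype.ofFinite G
  by_contra! H
  refine 𝔭.not_irrelevant_le ((HomogeneousIdeal.irrelevant_le _).mpr fun d hd x hx ↦ ?_)
  have hp : 𝔭.asHomogeneousIdeal.toIdeal.IsPrime := 𝔭.isPrime
  have hdeg : (MulSemiringAction.charpoly G x).natDegree = Fintype.card G := by
    have : Nontrivial S :=
      not_subsingleton_iff_nontrivial.mp fun _ ↦ hp.ne_top (Subsingleton.elim _ _)
    rw [MulSemiringAction.charpoly_eq, Polynomial.natDegree_finsetProd_X_sub_C_eq_card,
      Finset.card_univ]
  have hcoeff : ∀ k < Fintype.card G,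
      (MulSemiringAction.charpoly G x).coeff k ∈ 𝔭.asHomogeneousIdeal.toIdeal := by
    intro k hk
    refine H _ ⟨(Fintype.card G - k) * d, Nat.mul_pos (by omega) hd, ?_⟩
      fun σ ↦ MulSemiringAction.smul_coeff_charpoly x k σ
    rw [MulSemiringAction.charpoly_eq]
    exact coeff_prod_X_sub_C_mem 𝒜 d _ (fun σ ↦ hgraded σ d x hx) _ _ k
      (by rw [Finset.card_univ]; omega)
  have heval := MulSemiringAction.eval_charpoly G x
  have hlead : (MulSemiringAction.charpoly G x).coeff (Fintype.card G) = 1 := by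
    rw [← hdeg]
    exact MulSemiringAction.monic_charpoly G x
  rw [Polynomial.eval_eq_sum_range, hdeg, Finset.sum_range_succ, hlead, one_mul] at heval
  refine hp.mem_of_pow_mem (Fintype.card G) ?_
  rw [eq_neg_of_add_eq_zero_right heval]
  exact neg_mem (sum_mem fun k hk ↦
    Ideal.mul_mem_right _ _ (hcoeff k (Finset.mem_range.mp hk)))

/-- The basic open sets `D₊(f)`, for `f` ranging over the `G`-invariant homogeneous elements
of positive degree, cover `Proj S`; equivalently, every relevant homogeneous prime ideal of
`S` misses some `G`-invariant homogeneous element of positive degree. -/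
theorem invariant_basicOpen_cover
    (S : Type*) [CommRing S] (𝒜 : ℕ → Submodule ℤ S) [GradedAlgebra 𝒜]
    (G : Type*) [Group G] [Finite G] [MulSemiringAction G S]
    (hgraded : ∀ (σ : G) (d : ℕ) (x : S), x ∈ 𝒜 d → σ • x ∈ 𝒜 d) :
    (⋃ f ∈ {x : S | (∃ d : ℕ, 0 < d ∧ x ∈ 𝒜 d) ∧ ∀ σ : G, σ • x = x},
        (ProjectiveSpectrum.basicOpen 𝒜 f : Set (ProjectiveSpectrum 𝒜))) = Set.univ ∧
    (∀ 𝔭 : ProjectiveSpectrum 𝒜,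
      ∃ f : S, (∃ d : ℕ, 0 < d ∧ f ∈ 𝒜 d) ∧ (∀ σ : G, σ • f = f) ∧
        f ∉ 𝔭.asHomogeneousIdeal) := by
  refine ⟨Set.eq_univ_of_forall fun 𝔭 ↦ ?_, exists_invariant_notMem 𝒜 G hgraded⟩
  obtain ⟨f, hd, hf, hfp⟩ := exists_invariant_notMem 𝒜 G hgraded 𝔭
  exact Set.mem_biUnion (show f ∈ {x : S | _} from ⟨hd, hf⟩) hfp
end

section
/- Let g ≥ 1 and 0 ≤ l ≤ g. For integer matrices λ, μ of size l×(g−l) and χ of size l×l, let M(λ,μ,χ) denote the 2g×2g integer matrix with block form (block rows and columns of sizes g−l, l, g−l, l) [[1_{g−l}, 0, 0, μᵀ], [λ, 1_l, μ, χ], [0, 0, 1_{g−l}, −λᵀ], [0, 0, 0, 1_l]]. Then: (i) if χ + μλᵀ is symmetric, then M(λ,μ,χ) belongs to the symplectic group Sp_{2g}(ℤ); (ii) for all λ, μ, χ, λ', μ', χ' one has M(λ,μ,χ) · M(λ',μ',χ') = M(λ+λ', μ+μ', χ+χ'+λμ'ᵀ−μλ'ᵀ); and (iii) the map (λ,μ,χ)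 ↦ M(λ,μ,χ) is injective. -/
/-!
All three claims are block computations. Write `M(λ, μ, χ) = [[A, B], [0, D]]`. In `M J Mᵀ` the
off-diagonal blocks are `∓ 1` because `A * Dᵀ = 1`, and the upper left block vanishes exactly when
`A * Bᵀ` is symmetric; its only block that is not automatically symmetric is `λμᵀ + χᵀ`, which is
the transpose of `χ + μλᵀ`. The product formula is read off block by block, and injectivity holds
because `λ`, `μ` and `χ` occur as blocks of the matrix.
-/

open Matrix

/-- The matrix `M(λ, μ, χ)` associated to a triple of integer matrices, which realizes the
embedding of the discrete Heisenberg group `H_ℤ^{(g-l,l)}` into `Sp_{2g}(ℤ)`. -/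
def heisenbergMatrix (g l : ℕ)
    (lam mu : Matrix (Fin l) (Fin (g - l)) ℤ) (chi : Matrix (Fin l) (Fin l) ℤ) :
    Matrix ((Fin (g - l) ⊕ Fin l) ⊕ (Fin (g - l) ⊕ Fin l))
      ((Fin (g - l) ⊕ Fin l) ⊕ (Fin (g - l) ⊕ Fin l)) ℤ :=
  fromBlocks (fromBlocks 1 0 lam 1) (fromBlocks 0 muᵀ mu chi) 0 (fromBlocks 1 (-lamᵀ) 0 1)

/-- The map `(λ, μ, χ) ↦ M(λ, μ, χ)` lands in `Sp_{2g}(ℤ)` whenever `χ + μλᵀ` is symmetric,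
is compatible with the Heisenberg group law, and is injective. -/
theorem heisenbergMatrix_embedding (g l : ℕ) (hg : 1 ≤ g) (hl : l ≤ g) :
    (∀ (lam mu : Matrix (Fin l) (Fin (g - l)) ℤ) (chi : Matrix (Fin l) (Fin l) ℤ),
      (chi + mu * lamᵀ).IsSymm →
        heisenbergMatrix g l lam mu chi ∈
          Matrix.symplecticGroup (Fin (g - l) ⊕ Fin l) ℤ) ∧
    (∀ (lam mu : Matrix (Fin l) (Fin (g - l)) ℤ) (chi : Matrix (Fin l) (Fin l) ℤ)
      (lam' mu' : Matrix (Fin l) (Fin (g - l)) ℤ) (chi' : Matrix (Fin l) (Fin l) ℤ),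
      heisenbergMatrix g l lam mu chi * heisenbergMatrix g l lam' mu' chi' =
        heisenbergMatrix g l (lam + lam') (mu + mu')
          (chi + chi' + lam * mu'ᵀ - mu * lam'ᵀ)) ∧
    Function.Injective
      (fun t : Matrix (Fin l) (Fin (g - l)) ℤ × Matrix (Fin l) (Fin (g - l)) ℤ ×
          Matrix (Fin l) (Fin l) ℤ =>
        heisenbergMatrix g l t.1 t.2.1 t.2.2) := by
  refine ⟨?_, ?_, ?_⟩
  · intro lam mu chi h
    -- The hypothesis is exactly the symmetry of the lower right block of `A * Bᵀ`,
    -- where `A` and `B` are the upper blocks of the matrix.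
    have h' : lam * muᵀ + chiᵀ = chi + mu * lamᵀ := by
      have h₀ := h.eq
      rw [transpose_add, transpose_mul, transpose_transpose] at h₀
      rw [add_comm, h₀]
    rw [SymplecticGroup.mem_iff, heisenbergMatrix, J]
    simp only [fromBlocks_multiply, fromBlocks_transpose, ← fromBlocks_one, fromBlocks_neg,
      transpose_one, transpose_zero, transpose_neg, transpose_transpose, Matrix.mul_zero,
      Matrix.zero_mul, Matrix.mul_one, Matrix.one_mul, Matrix.mul_neg, Matrix.neg_mul,
      neg_zero, neg_neg, add_zero, zero_add, fromBlocks_add, fromBlocks_inj]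
    have h₄ : mu * lamᵀ + chi + (-(lam * muᵀ) + -chiᵀ) = 0 := by
      rw [← neg_add, h']
      abel
    rw [h₄]
    simp only [add_neg_cancel, neg_add_cancel, fromBlocks_zero, and_self]
  · intro lam mu chi lam' mu' chi'
    simp only [heisenbergMatrix, fromBlocks_multiply, fromBlocks_add, fromBlocks_inj,
      transpose_add, Matrix.mul_zero, Matrix.zero_mul, Matrix.mul_one, Matrix.one_mul,
      Matrix.mul_neg, add_zero, zero_add]
    refine ⟨trivial, ⟨trivial, ?_, ?_, ?_⟩, trivial, trivial, ?_, trivial, ?_⟩ <;> abel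
  · rintro ⟨lam, mu, chi⟩ ⟨lam', mu', chi'⟩ h
    simp only [heisenbergMatrix, fromBlocks_inj] at h
    obtain ⟨⟨-, -, hlam, -⟩, ⟨-, -, hmu, hchi⟩, -⟩ := h
    rw [hlam, hmu, hchi]
end
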